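/- Let A ∈ ℝ^{n×n} be symmetric positive definite, b ∈ ℝⁿ, and ε, V ∈ ℝ with ε ≠ 0. Set s = 𝟙ᵀA⁻¹𝟙, t = bᵀA⁻¹𝟙, v = Vs + εt, and D₀ = ε²A + (V𝟙 + εb)𝟙ᵀ, and assume ε² + v ≠ 0. Then D₀⁻¹𝟙 = α·A⁻¹𝟙 + β·A⁻¹b and D₀⁻¹b = δ·A⁻¹𝟙 + ζ·A⁻¹b, where α = (ε² + εt)/(ε²(ε² + v)), β = −s/(ε(ε² + v)), δ = −Vt/(ε²(ε² + v)), and ζ = (ε² + Vs)/(ε²(ε² + v)). -/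

import Mathlib

open Matrix

/-!
With `w = V𝟙 + εb`, the Sherman–Morrison formula for the rank-one perturbation `D₀ = ε²A + w𝟙ᵀ`
gives `D₀⁻¹y = ε⁻²(A⁻¹y - (𝟙ᵀA⁻¹y / (ε² + 𝟙ᵀA⁻¹w)) A⁻¹w)`. Here `𝟙ᵀA⁻¹b = bᵀA⁻¹𝟙 = t` by
symmetry of `A⁻¹`, so the denominator is `ε² + v`, and substituting `A⁻¹w = V A⁻¹𝟙 + ε A⁻¹b` with
`y = 𝟙` and `y = b` gives the coefficients.
-/

theorem dotProduct_mulVec_comm_of_isSymm {m R : Type*} [Fintype m] [CommSemiring R]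
    {B : Matrix m m R} (hB : B.IsSymm) (x y : m → R) : x ⬝ᵥ B *ᵥ y = y ⬝ᵥ B *ᵥ x := by
  rw [← dotProduct_transpose_mulVec, hB.eq]

section RankOneUpdate

variable {m K : Type*} [Fintype m] [DecidableEq m] [Field K] {A : Matrix m m K}

theorem nonsing_inv_smul_of_ne_zero (hA : IsUnit A) {c : K} (hc : c ≠ 0) : (c • A)⁻¹ = c⁻¹ • A⁻¹ :=
  inv_smul' A (Units.mk0 c hc) ((isUnit_iff_isUnit_det A).1 hA)

theorem inv_add_vecMulVec (hA : IsUnit A) {w u : m → K} (h : 1 + u ⬝ᵥ A⁻¹ *ᵥ w ≠ 0) :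
    (A + vecMulVec w u)⁻¹ =
      A⁻¹ - (1 + u ⬝ᵥ A⁻¹ *ᵥ w)⁻¹ • vecMulVec (A⁻¹ *ᵥ w) (u ᵥ* A⁻¹) := by
  have hdet : IsUnit A.det := (isUnit_iff_isUnit_det A).1 hA
  refine inv_eq_right_inv ?_
  set r := u ⬝ᵥ A⁻¹ *ᵥ w with hr
  have hAw : A * vecMulVec (A⁻¹ *ᵥ w) (u ᵥ* A⁻¹) = vecMulVec w (u ᵥ* A⁻¹) := by
    rw [mul_vecMulVec, mulVec_mulVec, mul_nonsing_inv A hdet, one_mulVec]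
  have hww : vecMulVec w u * vecMulVec (A⁻¹ *ᵥ w) (u ᵥ* A⁻¹) = r • vecMulVec w (u ᵥ* A⁻¹) := by
    rw [vecMulVec_mul_vecMulVec, ← hr, vecMulVec_smul]
  calc (A + vecMulVec w u) * (A⁻¹ - (1 + r)⁻¹ • vecMulVec (A⁻¹ *ᵥ w) (u ᵥ* A⁻¹))
      = 1 + vecMulVec w (u ᵥ* A⁻¹) - ((1 + r)⁻¹ * (1 + r)) • vecMulVec w (u ᵥ* A⁻¹) := by
        rw [mul_sub, add_mul, mul_nonsing_inv A hdet, vecMulVec_mul, mul_smul_comm, add_mul, hAw,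
          hww, smul_add, smul_smul, mul_add, mul_one, add_smul]
    _ = 1 := by rw [inv_mul_cancel₀ h, one_smul, add_sub_cancel_right]

theorem inv_smul_add_vecMulVec_mulVec (hA : IsUnit A) {c : K} (hc : c ≠ 0) {w u : m → K}
    (h : c + u ⬝ᵥ A⁻¹ *ᵥ w ≠ 0) (y : m → K) :
    (c • A + vecMulVec w u)⁻¹ *ᵥ y =
      c⁻¹ • (A⁻¹ *ᵥ y - ((u ⬝ᵥ A⁻¹ *ᵥ y) / (c + u ⬝ᵥ A⁻¹ *ᵥ w)) • A⁻¹ *ᵥ w) := by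
  have hcA : IsUnit (c • A) := hA.smul (Units.mk0 c hc)
  have hden : 1 + u ⬝ᵥ (c • A)⁻¹ *ᵥ w = c⁻¹ * (c + u ⬝ᵥ A⁻¹ *ᵥ w) := by
    rw [nonsing_inv_smul_of_ne_zero hA hc, smul_mulVec, dotProduct_smul, smul_eq_mul, mul_add,
      inv_mul_cancel₀ hc]
  have hden_ne : 1 + u ⬝ᵥ (c • A)⁻¹ *ᵥ w ≠ 0 := hden ▸ mul_ne_zero (inv_ne_zero hc) h
  rw [inv_add_vecMulVec hcA hden_ne, hden, nonsing_inv_smul_of_ne_zero hA hc]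
  simp only [sub_mulVec, smul_mulVec, vecMulVec_mulVec, ← dotProduct_mulVec, dotProduct_smul,
    op_smul_eq_smul, smul_sub, smul_smul, smul_eq_mul]
  congr 2
  field_simp

theorem D0_inv_coefficients_general (hA : IsUnit A) (u b : m → K) (ε V : K) (hε : ε ≠ 0)
    (s t : K) (hs : s = u ⬝ᵥ A⁻¹ *ᵥ u) (ht : t = u ⬝ᵥ A⁻¹ *ᵥ b)
    (v : K) (hv : v = V * s + ε * t)
    (D₀ : Matrix m m K) (hD₀ : D₀ = ε ^ 2 • A + vecMulVec (V • u + ε • b) u)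
    (hεv : ε ^ 2 + v ≠ 0) :
    D₀⁻¹ *ᵥ u =
      ((ε ^ 2 + ε * t) / (ε ^ 2 * (ε ^ 2 + v))) • A⁻¹ *ᵥ u +
        (-(s / (ε * (ε ^ 2 + v)))) • A⁻¹ *ᵥ b ∧
    D₀⁻¹ *ᵥ b =
      (-(V * t) / (ε ^ 2 * (ε ^ 2 + v))) • A⁻¹ *ᵥ u +
        ((ε ^ 2 + V * s) / (ε ^ 2 * (ε ^ 2 + v))) • A⁻¹ *ᵥ b := by
  have hw : A⁻¹ *ᵥ (V • u + ε • b) = V • A⁻¹ *ᵥ u + ε • A⁻¹ *ᵥ b := by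
    rw [mulVec_add, mulVec_smul, mulVec_smul]
  have huw : u ⬝ᵥ A⁻¹ *ᵥ (V • u + ε • b) = v := by
    rw [hw, dotProduct_add, dotProduct_smul, dotProduct_smul, ← hs, ← ht, hv, smul_eq_mul,
      smul_eq_mul]
  have hD₀_inv (y : m → K) : D₀⁻¹ *ᵥ y = (ε ^ 2)⁻¹ •
      (A⁻¹ *ᵥ y - ((u ⬝ᵥ A⁻¹ *ᵥ y) / (ε ^ 2 + v)) • (V • A⁻¹ *ᵥ u + ε • A⁻¹ *ᵥ b)) := by
    rw [hD₀, inv_smul_add_vecMulVec_mulVec hA (pow_ne_zero 2 hε) (huw.symm ▸ hεv), huw, hw]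
  rw [hD₀_inv u, hD₀_inv b, ← hs, ← ht]
  constructor <;> match_scalars <;> field_simp <;> linear_combination hv

end RankOneUpdate

/-- Coefficients expressing `D₀⁻¹𝟙` and `D₀⁻¹b` in the span of
`A⁻¹𝟙` and `A⁻¹b` (Appendix A.1 of the paper). -/
theorem D0_inv_coefficients {n : ℕ}
    (A : Matrix (Fin n) (Fin n) ℝ) (hA : A.PosDef)
    (b : Fin n → ℝ) (ε V : ℝ) (hε : ε ≠ 0)
    (s t : ℝ)
    (hs : s = (1 : Fin n → ℝ) ⬝ᵥ A⁻¹.mulVec 1)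
    (ht : t = b ⬝ᵥ A⁻¹.mulVec 1)
    (v : ℝ) (hv : v = V * s + ε * t)
    (D₀ : Matrix (Fin n) (Fin n) ℝ)
    (hD₀ : D₀ = ε ^ 2 • A + vecMulVec (V • (1 : Fin n → ℝ) + ε • b) (1 : Fin n → ℝ))
    (hεv : ε ^ 2 + v ≠ 0) :
    D₀⁻¹.mulVec 1 =
      ((ε ^ 2 + ε * t) / (ε ^ 2 * (ε ^ 2 + v))) • A⁻¹.mulVec 1 +
        (-(s / (ε * (ε ^ 2 + v)))) • A⁻¹.mulVec b ∧
    D₀⁻¹.mulVec b =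
      (-(V * t) / (ε ^ 2 * (ε ^ 2 + v))) • A⁻¹.mulVec 1 +
        ((ε ^ 2 + V * s) / (ε ^ 2 * (ε ^ 2 + v))) • A⁻¹.mulVec b := by
  have hA_inv : A⁻¹.IsSymm := (isHermitian_iff_isSymm.1 hA.isHermitian).inv
  exact D0_inv_coefficients_general hA.isUnit 1 b ε V hε s t hs
    (ht.trans (dotProduct_mulVec_comm_of_isSymm hA_inv b 1)) v hv D₀ hD₀ hεv
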